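/- Let φ : EuclideanSpace ℝ (Fin m) → EuclideanSpace ℝ (Fin (n+1)) be a smooth sphere-valued map (‖φ(x)‖ = 1 for all x) with constant energy density ∑_{i=1}^{m} ‖∂φ/∂xᵢ(x)‖² = c for all x. Then for every x the following two conditions are equivalent: (i) Δ²φ(x) + 2c·Δφ(x) + (2c² + ‖Δφ(x)‖² + 2·∑_{i=1}^{m} ⟨∂(Δφ)/∂xᵢ(x), ∂φ/∂xᵢ(x)⟩)·φ(x) = 0; (ii) Δ²φ(x) + 2c·Δφ(x) + (2c² − ⟨Δ²φ(x), φ(x)⟩)·φ(x) = 0. -/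

import Mathlib

open scoped RealInnerProductSpace

/-- Componentwise Laplacian of a map `EuclideanSpace ℝ (Fin m) → F` with respect to the
standard orthonormal coordinates: `Δφ(x) = ∑ i, ∂²φ/∂xᵢ²(x)`. -/
noncomputable def lap {m : ℕ} {F : Type*} [NormedAddCommGroup F] [NormedSpace ℝ F]
    (φ : EuclideanSpace ℝ (Fin m) → F) (x : EuclideanSpace ℝ (Fin m)) : F :=
  ∑ i : Fin m,
    fderiv ℝ (fun y => fderiv ℝ φ y (EuclideanSpace.single i 1)) x (EuclideanSpace.single i 1)

/-! Differentiating `‖φ‖² = const` twice gives `⟪Δφ, φ⟫ = -e`, where `e` is the energy density.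
Applying `Δ` once more and expanding the left side by the product rule gives
`⟪Δ²φ, φ⟫ + 2 ∑ᵢ ⟪∂ᵢΔφ, ∂ᵢφ⟫ + ‖Δφ‖² = -Δe`. When `e` is constant, the right side vanishes, and the
coefficients of `φ` in the two equations coincide. -/

open scoped Topology

section SecondDerivative

variable {𝕜 E F G H : Type*} [NontriviallyNormedField 𝕜]
  [NormedAddCommGroup E] [NormedSpace 𝕜 E] [NormedAddCommGroup F] [NormedSpace 𝕜 F]
  [NormedAddCommGroup G] [NormedSpace 𝕜 G] [NormedAddCommGroup H] [NormedSpace 𝕜 H]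

theorem contDiffAt_fderiv_apply {f : E → F} {x : E} {k n : WithTop ℕ∞}
    (hf : ContDiffAt 𝕜 n f x) (hkn : k + 1 ≤ n) (v : E) :
    ContDiffAt 𝕜 k (fun y => fderiv 𝕜 f y v) x :=
  (hf.fderiv_right hkn).clm_apply contDiffAt_const

theorem fderiv_bilinear_apply (B : F →L[𝕜] G →L[𝕜] H) {f : E → F} {g : E → G} {x : E}
    (hf : DifferentiableAt 𝕜 f x) (hg : DifferentiableAt 𝕜 g x) (v : E) :
    fderiv 𝕜 (fun y => B (f y) (g y)) x v =
      B (f x) (fderiv 𝕜 g x v) + B (fderiv 𝕜 f x v) (g x) := by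
  rw [B.fderiv_of_bilinear hf hg]
  rfl

theorem fderiv_fderiv_bilinear_apply (B : F →L[𝕜] G →L[𝕜] H) {f : E → F} {g : E → G} {x : E}
    (hf : ContDiffAt 𝕜 2 f x) (hg : ContDiffAt 𝕜 2 g x) (v w : E) :
    fderiv 𝕜 (fun y => fderiv 𝕜 (fun z => B (f z) (g z)) y v) x w =
      B (fderiv 𝕜 (fun y => fderiv 𝕜 f y v) x w) (g x) +
        (B (fderiv 𝕜 f x v) (fderiv 𝕜 g x w) + B (fderiv 𝕜 f x w) (fderiv 𝕜 g x v)) +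
        B (f x) (fderiv 𝕜 (fun y => fderiv 𝕜 g y v) x w) := by
  have hf₀ : DifferentiableAt 𝕜 f x := hf.differentiableAt two_ne_zero
  have hg₀ : DifferentiableAt 𝕜 g x := hg.differentiableAt two_ne_zero
  have hf₁ : DifferentiableAt 𝕜 (fun y => fderiv 𝕜 f y v) x :=
    (contDiffAt_fderiv_apply hf one_add_one_eq_two.le v).differentiableAt one_ne_zero
  have hg₁ : DifferentiableAt 𝕜 (fun y => fderiv 𝕜 g y v) x :=
    (contDiffAt_fderiv_apply hg one_add_one_eq_two.le v).differentiableAt one_ne_zero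
  have first_derivative : (fun y => fderiv 𝕜 (fun z => B (f z) (g z)) y v) =ᶠ[𝓝 x]
      fun y => B (f y) (fderiv 𝕜 g y v) + B (fderiv 𝕜 f y v) (g y) := by
    filter_upwards [hf.eventually (by simp), hg.eventually (by simp)] with y hfy hgy
    exact fderiv_bilinear_apply B (hfy.differentiableAt two_ne_zero)
      (hgy.differentiableAt two_ne_zero) v
  rw [first_derivative.fderiv_eq,
    fderiv_fun_add (B.hasFDerivAt_of_bilinear hf₀.hasFDerivAt hg₁.hasFDerivAt).differentiableAt
      (B.hasFDerivAt_of_bilinear hf₁.hasFDerivAt hg₀.hasFDerivAt).differentiableAt,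
    add_apply, fderiv_bilinear_apply B hf₀ hg₁,
    fderiv_bilinear_apply B hf₁ hg₀]
  abel

end SecondDerivative

section Laplacian

variable {m : ℕ} {F G H : Type*} [NormedAddCommGroup F] [NormedSpace ℝ F]
  [NormedAddCommGroup G] [NormedSpace ℝ G] [NormedAddCommGroup H] [NormedSpace ℝ H]
  {x : EuclideanSpace ℝ (Fin m)}

theorem contDiffAt_lap {f : EuclideanSpace ℝ (Fin m) → F} {k n : WithTop ℕ∞}
    (hf : ContDiffAt ℝ n f x) (hkn : k + 2 ≤ n) : ContDiffAt ℝ k (lap f) x := by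
  have hkn' : k + 1 + 1 ≤ n := by rwa [add_assoc, one_add_one_eq_two]
  exact ContDiffAt.sum fun i _ =>
    contDiffAt_fderiv_apply (contDiffAt_fderiv_apply hf hkn' _) le_rfl _

theorem lap_congr {f g : EuclideanSpace ℝ (Fin m) → F} (h : f =ᶠ[𝓝 x] g) : lap f x = lap g x := by
  refine Finset.sum_congr rfl fun i _ => ?_
  have partial_congr : (fun y => fderiv ℝ f y (EuclideanSpace.single i 1)) =ᶠ[𝓝 x]
      fun y => fderiv ℝ g y (EuclideanSpace.single i 1) :=
    h.fderiv.mono fun _ hy => DFunLike.congr_fun hy _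
  rw [partial_congr.fderiv_eq]

theorem lap_const (a : F) (x : EuclideanSpace ℝ (Fin m)) : lap (fun _ => a) x = 0 := by
  simp [lap]

theorem lap_neg (f : EuclideanSpace ℝ (Fin m) → F) (x : EuclideanSpace ℝ (Fin m)) :
    lap (fun y => -f y) x = -lap f x := by
  simp [lap]

theorem lap_bilinear (B : F →L[ℝ] G →L[ℝ] H) {f : EuclideanSpace ℝ (Fin m) → F}
    {g : EuclideanSpace ℝ (Fin m) → G} (hf : ContDiffAt ℝ 2 f x) (hg : ContDiffAt ℝ 2 g x) :
    lap (fun y => B (f y) (g y)) x =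
      B (lap f x) (g x) +
        (2 : ℝ) • ∑ i, B (fderiv ℝ f x (EuclideanSpace.single i 1))
          (fderiv ℝ g x (EuclideanSpace.single i 1)) +
        B (f x) (lap g x) := by
  simp only [lap, fderiv_fderiv_bilinear_apply B hf hg, Finset.sum_add_distrib, two_smul, map_sum,
    sum_apply]

/-- The energy density `∑ i, ‖∂φ/∂xᵢ(x)‖²` of a map on Euclidean space, without the factor `1/2`
often included for harmonic maps. -/
noncomputable def energyDensity (φ : EuclideanSpace ℝ (Fin m) → F)
    (x : EuclideanSpace ℝ (Fin m)) : ℝ :=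
  ∑ i, ‖fderiv ℝ φ x (EuclideanSpace.single i 1)‖ ^ 2

end Laplacian

section InnerProduct

variable {m : ℕ} {F : Type*} [NormedAddCommGroup F] [InnerProductSpace ℝ F]
  {x : EuclideanSpace ℝ (Fin m)}

theorem lap_inner {f g : EuclideanSpace ℝ (Fin m) → F}
    (hf : ContDiffAt ℝ 2 f x) (hg : ContDiffAt ℝ 2 g x) :
    lap (fun y => ⟪f y, g y⟫) x =
      ⟪lap f x, g x⟫ +
        2 * ∑ i, ⟪fderiv ℝ f x (EuclideanSpace.single i 1),
          fderiv ℝ g x (EuclideanSpace.single i 1)⟫ +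
        ⟪f x, lap g x⟫ :=
  lap_bilinear (innerSL ℝ) hf hg

theorem lap_norm_sq {φ : EuclideanSpace ℝ (Fin m) → F} (hφ : ContDiffAt ℝ 2 φ x) :
    lap (fun y => ‖φ y‖ ^ 2) x = 2 * (⟪lap φ x, φ x⟫ + energyDensity φ x) := by
  simp only [← real_inner_self_eq_norm_sq, energyDensity, lap_inner hφ hφ,
    real_inner_comm (lap φ x) (φ x)]
  ring

theorem inner_lap_self_of_norm_eventually_const {φ : EuclideanSpace ℝ (Fin m) → F} {r : ℝ}
    (hφ : ContDiffAt ℝ 2 φ x) (hnorm : ∀ᶠ y in 𝓝 x, ‖φ y‖ = r) :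
    ⟪lap φ x, φ x⟫ = -energyDensity φ x := by
  have norm_sq_const : (fun y => ‖φ y‖ ^ 2) =ᶠ[𝓝 x] fun _ => r ^ 2 :=
    hnorm.mono fun y hy => by simp only [hy]
  have lap_norm_sq_eq_zero := (lap_congr norm_sq_const).trans (lap_const _ x)
  rw [lap_norm_sq hφ] at lap_norm_sq_eq_zero
  linarith

theorem inner_lap_lap_self_of_norm_eventually_const {φ : EuclideanSpace ℝ (Fin m) → F} {r : ℝ}
    (hφ : ContDiffAt ℝ 4 φ x) (hnorm : ∀ᶠ y in 𝓝 x, ‖φ y‖ = r) :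
    ⟪lap (lap φ) x, φ x⟫ =
      -(‖lap φ x‖ ^ 2 +
        2 * ∑ i, ⟪fderiv ℝ (lap φ) x (EuclideanSpace.single i 1),
          fderiv ℝ φ x (EuclideanSpace.single i 1)⟫ +
        lap (energyDensity φ) x) := by
  have inner_lap_self : (fun y => ⟪lap φ y, φ y⟫) =ᶠ[𝓝 x] fun y => -energyDensity φ y := by
    filter_upwards [hφ.eventually (by simp), hnorm.eventually_nhds] with y hφy hnormy
    exact inner_lap_self_of_norm_eventually_const (hφy.of_le (by norm_num)) hnormy
  have product_rule := lap_inner (contDiffAt_lap hφ (by norm_num)) (hφ.of_le (by norm_num))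
  rw [lap_congr inner_lap_self, lap_neg, real_inner_self_eq_norm_sq] at product_rule
  linarith

end InnerProduct

theorem biharmonic_eq_iff_simplified_general {m : ℕ} {F : Type*} [NormedAddCommGroup F]
    [InnerProductSpace ℝ F] {φ : EuclideanSpace ℝ (Fin m) → F} {x : EuclideanSpace ℝ (Fin m)}
    {r c : ℝ} (hφ : ContDiffAt ℝ 4 φ x) (hnorm : ∀ᶠ y in 𝓝 x, ‖φ y‖ = r)
    (henergy : ∀ᶠ y in 𝓝 x, energyDensity φ y = c) :
    (lap (lap φ) x + (2 * c) • lap φ x +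
        (2 * c ^ 2 + ‖lap φ x‖ ^ 2 +
          2 * ∑ i : Fin m,
            ⟪fderiv ℝ (lap φ) x (EuclideanSpace.single i 1),
              fderiv ℝ φ x (EuclideanSpace.single i 1)⟫) • φ x = 0) ↔
      (lap (lap φ) x + (2 * c) • lap φ x +
        (2 * c ^ 2 - ⟪lap (lap φ) x, φ x⟫) • φ x = 0) := by
  have lap_energy : lap (energyDensity φ) x = 0 := (lap_congr henergy).trans (lap_const c x)
  rw [inner_lap_lap_self_of_norm_eventually_const hφ hnorm, lap_energy, add_zero, sub_neg_eq_add,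
    ← add_assoc]

theorem biharmonic_eq_iff_simplified {m n : ℕ}
    (φ : EuclideanSpace ℝ (Fin m) → EuclideanSpace ℝ (Fin (n + 1)))
    (hφ : ContDiff ℝ (⊤ : ℕ∞) φ) (hsphere : ∀ x, ‖φ x‖ = 1) (c : ℝ)
    (henergy : ∀ x, ∑ i : Fin m, ‖fderiv ℝ φ x (EuclideanSpace.single i 1)‖ ^ 2 = c)
    (x : EuclideanSpace ℝ (Fin m)) :
    (lap (lap φ) x + (2 * c) • lap φ x +
        (2 * c ^ 2 + ‖lap φ x‖ ^ 2 +
          2 * ∑ i : Fin m,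
            ⟪fderiv ℝ (lap φ) x (EuclideanSpace.single i 1),
              fderiv ℝ φ x (EuclideanSpace.single i 1)⟫) • φ x = 0) ↔
      (lap (lap φ) x + (2 * c) • lap φ x +
        (2 * c ^ 2 - ⟪lap (lap φ) x, φ x⟫) • φ x = 0) := by
  exact biharmonic_eq_iff_simplified_general
    (contDiff_infty.mp hφ 4).contDiffAt (.of_forall hsphere) (.of_forall henergy)
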